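/- Let p ≥ 1, let a = (a₀,a₁,…,a_p; b₁,…,b_p) ∈ ℂ^{p+1}×ℂ^p with a₀ ∉ ℤ≤0, and let k = (0,k₁,…,k_p; l₁,…,l_p) be a real vector with lᵢ > kᵢ > 0 for i = 1,…,p. Then for all sufficiently large n the integral E_p(a+nk) converges absolutely, and E_p(a+nk) = C · Φ_max^n · n^{−p/2} · (1 + O(1/n)) as n → +∞, where Φ_max := ∏_{i=1}^p kᵢ^{kᵢ}(lᵢ−kᵢ)^{lᵢ−kᵢ}/lᵢ^{lᵢ} and C := (2π)^{p/2} (1 − (k₁⋯k_p)/(l₁⋯l_p))^{−a₀} ∏_{i=1}^p kᵢ^{aᵢ−1/2}(lᵢ−kᵢ)^{bᵢ−aᵢ−1/2}/lᵢ^{bᵢ−1/2}; here f(n) = g·(1+O(1/n)) means there exist K > 0 and N with |f(n)/g − 1| ≤ K/n for all n ≥ N. -/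

import Mathlib

open Complex MeasureTheory

/-!
Away from the factor `(1 - t₁⋯t_p)^{-a₀}` the integrand of `E_p(a + nk)` is a product of Beta
densities, whose mass concentrates at `tᵢ = kᵢ / lᵢ`. So the integral should be
`(1 - s₀)^{-a₀} ∏ B(aᵢ + n kᵢ, bᵢ - aᵢ + n (lᵢ - kᵢ))` to leading order, where `s₀ = ∏ kᵢ / ∏ lᵢ`.
Laplace's method is replaced by exact moment computations with the Gamma and Beta densities.

*The Beta function.* Stirling's formula with error `O(1/x)` at real arguments
(`abs_log_Gamma_sub_log_stir_le`) follows from Robbins' bounds for factorials, with the convexity of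
`log Γ` between integers. For a complex shift `a`, `Γ(x + a) / (Γ(x) x^a)` is the mean of `u^a`,
`u = t/x`, against the normalised Gamma density `e^{-t} t^{x-1} / Γ(x)`. Expand `u^a` to first order
at `u = 1`: the density has mean `u = 1`, so the linear term vanishes, and the remainder is at most
a multiple of `(u - 1)² (u^m + u^{-m})`. The mean of the latter is a combination of second
differences of the integral moments `Γ(x + j) / (Γ(x) x^j) = 1 + O(1/x)`, and these differences are
`O(1/x)` since `1 - 2 + 1 = 0` (`nearOne_gammaRatio`). Together this gives `nearOne_beta`.

*The Euler integral.* The same argument is applied to the product Beta density. Expand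
`(1 - s)^{-a₀}`, `s = ∏ tᵢ`, to first order at `s₀`, with remainder at most a multiple of
`(s - s₀)² (1 - s)^{-m} ≤ (s - s₀)² ∏ (1 - tᵢ)^{-m}`. Multiplication by `s` raises each `aᵢ` by one,
which multiplies the leading constant of the Beta product by exactly `s₀` (`constProd_add_one`). So
the linear term cancels up to a relative error `O(1/n)`, and the remainder is dominated by a Beta
product with real exponents weighted by `(s - s₀)²`, whose leading constant carries the factor
`s₀² - 2 s₀ s₀ + s₀² = 0` (`euler_isBigO`).
-/

open Filter Asymptotics Topology

/-! ### Functions that are `1 + O(1/x)` -/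

/-- `f x = 1 + O(1/x)` as the real variable `x` tends to `+∞`. -/
def NearOne (f : ℝ → ℂ) : Prop :=
  (fun x => f x - 1) =O[atTop] (fun x : ℝ => x⁻¹)

namespace NearOne

theorem congr {f g : ℝ → ℂ} (hf : NearOne f) (h : ∀ᶠ x in atTop, f x = g x) : NearOne g := by
  refine IsBigO.congr' hf ?_ EventuallyEq.rfl
  filter_upwards [h] with x hx
  rw [hx]

theorem one : NearOne (fun _ => 1) := by
  simpa [NearOne] using isBigO_zero (E' := ℂ) (fun x : ℝ => x⁻¹) atTop

theorem tendsto {f : ℝ → ℂ} (hf : NearOne f) : Tendsto f atTop (𝓝 1) := by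
  have h := IsBigO.trans_tendsto hf tendsto_inv_atTop_zero
  simpa using h.add_const 1

theorem mul {f g : ℝ → ℂ} (hf : NearOne f) (hg : NearOne g) :
    NearOne (fun x => f x * g x) := by
  have h1 : (fun x => (f x - 1) * g x) =O[atTop] (fun x : ℝ => x⁻¹) := by
    simpa using IsBigO.mul hf (hg.tendsto.isBigO_one ℝ)
  refine (h1.add hg).congr_left fun x => ?_
  ring

theorem inv {f : ℝ → ℂ} (hf : NearOne f) : NearOne (fun x => (f x)⁻¹) := by
  have h1 : (fun x => (f x - 1) * (-(f x)⁻¹)) =O[atTop] (fun x : ℝ => x⁻¹) := by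
    simpa using IsBigO.mul hf (((hf.tendsto.inv₀ one_ne_zero).neg).isBigO_one ℝ)
  refine IsBigO.congr' h1 ?_ EventuallyEq.rfl
  filter_upwards [hf.tendsto.eventually_ne one_ne_zero] with x hx
  field_simp
  ring

theorem prod {ι : Type*} (s : Finset ι) {f : ι → ℝ → ℂ} (hf : ∀ i, NearOne (f i)) :
    NearOne (fun x => ∏ i ∈ s, f i x) := by
  classical
  induction s using Finset.induction_on with
  | empty => simpa using one
  | insert i s hi ih =>
    simp only [Finset.prod_insert hi]
    exact (hf i).mul ih

theorem comp_mul_right {f : ℝ → ℂ} (hf : NearOne f) {k : ℝ} (hk : 0 < k) :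
    NearOne (fun x => f (x * k)) := by
  have h := IsBigO.comp_tendsto hf (tendsto_id.atTop_mul_const hk)
  refine h.trans (IsBigO.of_bound k⁻¹ ?_)
  filter_upwards with x
  simp [abs_of_pos hk, mul_comm]

/-- A linear factor `x + c` is `x (1 + O(1/x))`. -/
theorem add_div (c : ℂ) : NearOne (fun x => ((x : ℂ) + c) / x) := by
  refine IsBigO.of_bound ‖c‖ ?_
  filter_upwards [eventually_gt_atTop 0] with x hx
  have hx' : (x : ℂ) ≠ 0 := by exact_mod_cast hx.ne'
  rw [show ((x : ℂ) + c) / x - 1 = c * (x : ℂ)⁻¹ by field_simp; ring]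
  simp

end NearOne

/-! ### Stirling's formula with rate at real arguments -/

/-- Stirling's formula `√(2π) x^{x-1/2} e^{-x}` for `Γ(x)`. -/
noncomputable def stir (x : ℝ) : ℝ :=
  √(2 * Real.pi) * x ^ (x - 1 / 2) * Real.exp (-x)

theorem stir_pos {x : ℝ} (hx : 0 < x) : 0 < stir x := by
  unfold stir; positivity

theorem log_stir {x : ℝ} (hx : 0 < x) :
    Real.log (stir x) =
      1 / 2 * Real.log 2 + 1 / 2 * Real.log Real.pi + (x - 1 / 2) * Real.log x - x := by
  have h1 := Real.rpow_pos_of_pos hx (x - 1 / 2)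
  have h2 : 0 < √(2 * Real.pi) := by positivity
  rw [stir, Real.log_mul (by positivity) (by positivity), Real.log_mul (by positivity)
    (by positivity), Real.log_exp, Real.log_rpow hx, Real.log_sqrt (by positivity),
    Real.log_mul (by norm_num) Real.pi_ne_zero]
  ring

/-- The upper half of Robbins' estimate: `log (stirlingSeq n) - 1/(12 n)` increases to its limit
`log √π`. -/
theorem log_stirlingSeq_le {n : ℕ} (hn : n ≠ 0) :
    Real.log (Stirling.stirlingSeq n) ≤ 1 / 2 * Real.log Real.pi + 1 / (12 * n) := by
  have hmono : Monotone (fun m : ℕ =>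
      Real.log (Stirling.stirlingSeq (m + 1)) - 1 / (12 * ((m : ℝ) + 1))) := by
    refine monotone_nat_of_le_succ fun m => ?_
    have h := Stirling.log_stirlingSeq_sdiff_le (m + 1)
    push_cast at h ⊢
    have e : 1 / (12 * ((m : ℝ) + 1) * (m + 1 + 1)) =
        1 / (12 * ((m : ℝ) + 1)) - 1 / (12 * ((m : ℝ) + 1 + 1)) := by
      field_simp
      ring
    linarith
  have hpi : √Real.pi ≠ 0 := by positivity
  have hlim : Tendsto (fun m : ℕ =>
      Real.log (Stirling.stirlingSeq (m + 1)) - 1 / (12 * ((m : ℝ) + 1))) atTop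
      (𝓝 (Real.log (√Real.pi) - 0)) := by
    refine Tendsto.sub ?_ ?_
    · exact ((Stirling.tendsto_stirlingSeq_sqrt_pi.log hpi).comp (tendsto_add_atTop_nat 1))
    · have h := (tendsto_one_div_add_atTop_nhds_zero_nat (𝕜 := ℝ)).const_mul (1 / 12)
      rw [mul_zero] at h
      refine h.congr fun m => ?_
      field_simp
  obtain ⟨m, rfl⟩ := Nat.exists_eq_succ_of_ne_zero hn
  have h := hmono.ge_of_tendsto hlim m
  rw [Real.log_sqrt Real.pi_pos.le] at h
  push_cast
  simp only [Nat.succ_eq_add_one] at *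
  linarith

/-- Stirling's formula with rate at real arguments. Between consecutive integers, log-convexity of
`Γ` pins `log Γ` down to within `O(1/x)`. -/
theorem abs_log_Gamma_sub_log_stir_le {x : ℝ} (hx : 3 ≤ x) :
    |Real.log (Real.Gamma x) - Real.log (stir x)| ≤ 4 / x := by
  obtain ⟨n, hn, θ, hθ, hθ1, rfl⟩ : ∃ n : ℕ, 2 ≤ n ∧ ∃ θ : ℝ, 0 < θ ∧ θ ≤ 1 ∧ x = n + θ := by
    have hc : 3 ≤ ⌈x⌉₊ := by exact_mod_cast hx.trans (Nat.le_ceil x)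
    have h1 := Nat.ceil_lt_add_one (show (0 : ℝ) ≤ x by linarith)
    have h2 := Nat.le_ceil x
    refine ⟨⌈x⌉₊ - 1, by omega, x - (⌈x⌉₊ - 1 : ℕ), ?_, ?_, by ring⟩ <;>
    · rw [Nat.cast_sub (by omega)]
      push_cast
      linarith
  have hfe : ∀ {y : ℝ}, 0 < y → (Real.log ∘ Real.Gamma) (y + 1) =
      (Real.log ∘ Real.Gamma) y + Real.log y := by
    intro y hy
    simp only [Function.comp_apply]
    rw [Real.Gamma_add_one hy.ne', Real.log_mul hy.ne' (Real.Gamma_pos_of_pos hy).ne', add_comm]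
  -- convexity of `log Γ` compares its values at `n + θ` and at `n`, up to logarithms
  have hup := Real.BohrMollerup.f_add_nat_le (n := n) Real.convexOn_log_Gamma hfe (by omega) hθ hθ1
  have hlo := Real.BohrMollerup.f_add_nat_ge Real.convexOn_log_Gamma hfe hn hθ
  have hnr : (2 : ℝ) ≤ n := by exact_mod_cast hn
  have hfac := hfe (show (0 : ℝ) < n by linarith)
  simp only [Function.comp_apply] at hup hlo hfac
  rw [Real.Gamma_nat_eq_factorial] at hfac
  have hs1 := log_stirlingSeq_le (show n ≠ 0 by omega)
  have hs2 : 1 / 2 * Real.log Real.pi ≤ Real.log (Stirling.stirlingSeq n) := by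
    have := Real.log_le_log (by positivity) (Stirling.sqrt_pi_le_stirlingSeq (show n ≠ 0 by omega))
    rw [Real.log_sqrt Real.pi_pos.le] at this
    linarith
  rw [Stirling.log_stirlingSeq_formula, Real.log_mul (by norm_num) (by positivity),
    Real.log_div (by positivity) (by positivity), Real.log_exp] at hs1 hs2
  have hl1 : Real.log n - 1 / (n - 1) ≤ Real.log (n - 1) := by
    have h := Real.log_le_sub_one_of_pos (show (0 : ℝ) < n / (n - 1) by
      apply div_pos <;> linarith)
    rw [Real.log_div (by linarith) (by linarith)] at h
    have e : (n : ℝ) / (n - 1) - 1 = 1 / (n - 1) := by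
      have : (n : ℝ) - 1 ≠ 0 := by linarith
      field_simp
      ring
    linarith
  have hl2 : Real.log (n + θ) - Real.log n ≤ θ / n := by
    have h := Real.log_le_sub_one_of_pos (show (0 : ℝ) < (n + θ) / n by positivity)
    rw [Real.log_div (by linarith) (by linarith)] at h
    have e : ((n : ℝ) + θ) / n - 1 = θ / n := by field_simp; ring
    linarith
  have hl3 : θ / (n + θ) ≤ Real.log (n + θ) - Real.log n := by
    have h := Real.log_le_sub_one_of_pos (show (0 : ℝ) < n / (n + θ) by positivity)
    rw [Real.log_div (by linarith) (by linarith)] at h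
    have e : (n : ℝ) / (n + θ) - 1 = - (θ / (n + θ)) := by field_simp; ring
    linarith
  rw [log_stir (by linarith)]
  have hxpos : 0 < (n : ℝ) + θ := by linarith
  have i1 : 1 / (12 * (n : ℝ)) ≤ 1 / (n + θ) := by
    apply one_div_le_one_div_of_le <;> linarith
  have i2 : 1 / ((n : ℝ) - 1) ≤ 3 / (n + θ) := by
    rw [div_le_div_iff₀ (by linarith) hxpos]
    linarith
  have i3 : 1 / (n : ℝ) ≤ 2 / (n + θ) := by
    rw [div_le_div_iff₀ (by linarith) hxpos]
    linarith
  have u1 : (n + θ - 1 / 2) * (θ / (n + θ)) = θ - θ * (1 / (n + θ)) / 2 := by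
    field_simp
  have u2 : (n + θ - 1 / 2) * (θ / n) = θ + θ * (θ - 1 / 2) * (1 / n) := by
    field_simp
    ring
  have m1 := mul_le_mul_of_nonneg_left hl3 (show 0 ≤ n + θ - 1 / 2 by linarith)
  have m2 := mul_le_mul_of_nonneg_left hl2 (show 0 ≤ n + θ - 1 / 2 by linarith)
  have m3 := mul_le_mul_of_nonneg_left hl1 hθ.le
  have p1 : 0 < 1 / ((n : ℝ) + θ) := by positivity
  have p2 : 0 < 1 / ((n : ℝ) - 1) := by apply div_pos <;> linarith
  have p3 : 0 < 1 / (n : ℝ) := by positivity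
  have q1 : θ * (1 / (n + θ)) ≤ 1 * (1 / (n + θ)) := by gcongr
  have q2 : θ * (1 / ((n : ℝ) - 1)) ≤ 1 * (1 / (n - 1)) := by gcongr
  have q3 : θ * (θ - 1 / 2) * (1 / (n : ℝ)) ≤ 1 / 2 * (1 / n) := by
    gcongr
    nlinarith
  have e3 : 3 / ((n : ℝ) + θ) = 3 * (1 / (n + θ)) := by ring
  have e4 : 4 / ((n : ℝ) + θ) = 4 * (1 / (n + θ)) := by ring
  have e2 : 2 / ((n : ℝ) + θ) = 2 * (1 / (n + θ)) := by ring
  rw [abs_le]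
  constructor
  · nlinarith
  · nlinarith

theorem nearOne_Gamma_div_stir :
    NearOne (fun x => (Real.Gamma x : ℂ) / (stir x : ℂ)) := by
  refine IsBigO.of_bound 8 ?_
  filter_upwards [eventually_ge_atTop 4] with x hx
  have hx0 : 0 < x := by linarith
  have h := abs_log_Gamma_sub_log_stir_le (show 3 ≤ x by linarith)
  have h1 : |Real.log (Real.Gamma x) - Real.log (stir x)| ≤ 1 :=
    h.trans (by rw [div_le_one hx0]; exact hx)
  have h2 := Real.abs_exp_sub_one_le h1
  rw [Real.exp_sub, Real.exp_log (Real.Gamma_pos_of_pos hx0), Real.exp_log (stir_pos hx0)] at h2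
  rw [← Complex.ofReal_div, ← Complex.ofReal_one, ← Complex.ofReal_sub, Complex.norm_real,
    Real.norm_eq_abs, Real.norm_eq_abs, abs_of_pos (inv_pos.mpr hx0)]
  calc _ ≤ _ := h2
    _ ≤ 2 * (4 / x) := by gcongr
    _ = 8 * x⁻¹ := by ring

/-! ### The Gamma function with a shifted complex argument -/

/-- Second-order Taylor estimate for `u ↦ u ^ a` at `u = 1`, valid on all of `(0, ∞)`: the second
derivative `a (a - 1) v ^ (a - 2)` is bounded by a multiple of `u ^ m + u ^ (-m)` for all `v`
between `1` and `u`. -/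
theorem exists_cpow_taylor_bound (a : ℂ) : ∃ m : ℕ, ∃ M : ℝ, 0 ≤ M ∧ ∀ u : ℝ, 0 < u →
    ‖(u : ℂ) ^ a - 1 - a * ((u : ℂ) - 1)‖ ≤ M * ((u - 1) ^ 2 * (u ^ m + (u ^ m)⁻¹)) := by
  refine ⟨⌈|a.re - 2|⌉₊, ‖a‖ * ‖a - 1‖, by positivity, fun u hu => ?_⟩
  set m := ⌈|a.re - 2|⌉₊
  have hm : |a.re - 2| ≤ m := Nat.le_ceil _
  set S := Set.uIcc 1 u
  have hpos : ∀ v ∈ S, 0 < v := fun v hv => lt_of_lt_of_le (lt_min one_pos hu) hv.1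
  have hdist : ∀ v ∈ S, |v - 1| ≤ |u - 1| := fun v hv => Set.abs_sub_left_of_mem_uIcc hv
  have hderiv : ∀ c : ℂ, ∀ v ∈ S,
      HasDerivAt (fun y : ℝ => (y : ℂ) ^ c) (c * (v : ℂ) ^ (c - 1)) v := by
    intro c v hv
    have h := ((hasDerivAt_id (v : ℂ)).cpow_const (c := c)
      (Or.inl (by simpa using hpos v hv))).comp_ofReal
    simpa using h
  have hbd : ∀ v ∈ S, v ^ (a.re - 2) ≤ u ^ m + (u ^ m)⁻¹ := by
    intro v hv
    have hv0 := hpos v hv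
    rcases le_total 1 u with h | h
    · obtain ⟨h1, hvu⟩ : v ∈ Set.Icc 1 u := by rwa [← Set.uIcc_of_le h]
      calc v ^ (a.re - 2) ≤ v ^ (m : ℝ) :=
            Real.rpow_le_rpow_of_exponent_le h1 ((le_abs_self _).trans hm)
        _ = v ^ m := Real.rpow_natCast _ _
        _ ≤ u ^ m := by gcongr
        _ ≤ _ := le_add_of_nonneg_right (by positivity)
    · obtain ⟨hvu, h1⟩ : v ∈ Set.Icc u 1 := by rwa [← Set.uIcc_of_ge h]
      calc v ^ (a.re - 2) ≤ v ^ (-(m : ℝ)) :=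
            Real.rpow_le_rpow_of_exponent_ge hv0 h1 (by linarith [neg_abs_le (a.re - 2)])
        _ = (v ^ m)⁻¹ := by rw [Real.rpow_neg hv0.le, Real.rpow_natCast]
        _ ≤ (u ^ m)⁻¹ := by gcongr
        _ ≤ _ := le_add_of_nonneg_left (by positivity)
  set B := u ^ m + (u ^ m)⁻¹
  have hB : 0 ≤ B := by positivity
  have h1S : (1 : ℝ) ∈ S := Set.left_mem_uIcc
  have huS : u ∈ S := Set.right_mem_uIcc
  have hSconv : Convex ℝ S := convex_uIcc 1 u
  have step1 : ∀ v ∈ S, ‖(v : ℂ) ^ (a - 1) - 1‖ ≤ ‖a - 1‖ * B * |u - 1| := by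
    intro v hv
    have h := hSconv.norm_image_sub_le_of_norm_hasDerivWithin_le
      (f := fun y : ℝ => (y : ℂ) ^ (a - 1)) (C := ‖a - 1‖ * B)
      (fun y hy => (hderiv (a - 1) y hy).hasDerivWithinAt) (fun y hy => ?_) h1S hv
    · simp only [Complex.ofReal_one, Complex.one_cpow, Real.norm_eq_abs] at h
      exact h.trans (mul_le_mul_of_nonneg_left (hdist v hv) (by positivity))
    · rw [norm_mul, Complex.norm_cpow_eq_rpow_re_of_pos (hpos y hy)]
      gcongr
      have e : (a - 1 - 1).re = a.re - 2 := by
        simp only [Complex.sub_re, Complex.one_re]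
        ring
      rw [e]
      exact hbd y hy
  have hR : ∀ v ∈ S, HasDerivWithinAt (fun y : ℝ => (y : ℂ) ^ a - 1 - a * ((y : ℂ) - 1))
      (a * ((v : ℂ) ^ (a - 1) - 1)) S v := by
    intro v hv
    have h1 := ((hderiv a v hv).sub_const 1).sub
      (((hasDerivAt_id (v : ℂ)).comp_ofReal.sub_const 1).const_mul a)
    rw [mul_sub]
    exact h1.hasDerivWithinAt
  have h := hSconv.norm_image_sub_le_of_norm_hasDerivWithin_le hR
    (C := ‖a‖ * (‖a - 1‖ * B * |u - 1|)) (fun y hy => ?_) h1S huS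
  · simp only [Complex.ofReal_one, Complex.one_cpow, Real.norm_eq_abs, sub_self, mul_zero,
      sub_zero] at h
    refine h.trans_eq ?_
    rw [← sq_abs (u - 1)]
    ring
  · rw [norm_mul]
    gcongr
    exact step1 y hy

/-- The ratio `Γ(x+c) / (Γ(x) x^c)`, which tends to `1`. -/
noncomputable def gammaRatio (c : ℂ) (x : ℝ) : ℂ :=
  Complex.Gamma (x + c) / ((Real.Gamma x : ℂ) * (x : ℂ) ^ c)

theorem eventually_add_re_pos (c : ℂ) : ∀ᶠ x : ℝ in atTop, 0 < x + c.re := by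
  filter_upwards [eventually_gt_atTop (-c.re)] with x hx
  linarith

theorem gammaRatio_add_one (c : ℂ) : ∀ᶠ x : ℝ in atTop,
    gammaRatio (c + 1) x = gammaRatio c x * (((x : ℂ) + c) / x) := by
  filter_upwards [eventually_gt_atTop 0, eventually_add_re_pos c] with x hx hc
  have hx' : (x : ℂ) ≠ 0 := by exact_mod_cast hx.ne'
  have hne : (x : ℂ) + c ≠ 0 := fun h => by
    have := congrArg Complex.re h
    simp at this
    linarith
  rw [gammaRatio, gammaRatio, ← add_assoc, Complex.Gamma_add_one _ hne, Complex.cpow_add _ _ hx',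
    Complex.cpow_one, div_mul_div_comm]
  congr 1 <;> ring

theorem nearOne_gammaRatio_intCast (j : ℤ) : NearOne (gammaRatio j) := by
  induction j with
  | zero =>
    refine NearOne.one.congr ?_
    filter_upwards [eventually_gt_atTop 0] with x hx
    have : (Real.Gamma x : ℂ) ≠ 0 := by exact_mod_cast (Real.Gamma_pos_of_pos hx).ne'
    simp [gammaRatio, Complex.Gamma_ofReal, this]
  | succ i ih =>
    refine (ih.mul (NearOne.add_div ((i : ℤ) : ℂ))).congr ?_
    filter_upwards [gammaRatio_add_one ((i : ℤ) : ℂ)] with x hx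
    rw [← hx]
    push_cast
    rfl
  | pred i ih =>
    refine (ih.mul (NearOne.add_div (-i - 1)).inv).congr ?_
    filter_upwards [gammaRatio_add_one (-(i : ℂ) - 1), eventually_gt_atTop 0,
      eventually_add_re_pos (-(i : ℂ) - 1)] with x hx hx0 hc
    have hx' : (x : ℂ) ≠ 0 := by exact_mod_cast hx0.ne'
    have hne : (x : ℂ) + (-i - 1) ≠ 0 := fun h => by
      have := congrArg Complex.re h
      simp at this hc
      linarith
    push_cast
    rw [sub_add_cancel] at hx
    rw [hx, mul_assoc, mul_inv_cancel₀ (div_ne_zero hne hx'), mul_one]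

/-- Normalised moments of the Gamma density: `∫ e^{-t} t^{x-1} (t/x)^j dt = Γ(x+j)/x^j`. -/
theorem gamma_moment {x : ℝ} (j : ℤ) (hj : 0 < x + j) :
    IntegrableOn (fun t : ℝ => Real.exp (-t) * t ^ (x - 1) * (t / x) ^ j) (Set.Ioi 0) ∧
    ∫ t in Set.Ioi (0 : ℝ), Real.exp (-t) * t ^ (x - 1) * (t / x) ^ j =
      Real.Gamma (x + j) / x ^ j := by
  have e : Set.EqOn (fun t : ℝ => Real.exp (-t) * t ^ (x + j - 1) * (x ^ j)⁻¹)
      (fun t : ℝ => Real.exp (-t) * t ^ (x - 1) * (t / x) ^ j) (Set.Ioi 0) := by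
    intro t ht
    have ht : 0 < t := ht
    simp only
    rw [show x + j - 1 = x - 1 + j by ring, Real.rpow_add_intCast ht.ne', div_zpow]
    ring
  constructor
  · exact IntegrableOn.congr_fun ((Real.GammaIntegral_convergent hj).mul_const _) e
      measurableSet_Ioi
  · rw [← setIntegral_congr_fun measurableSet_Ioi e, integral_mul_const,
      ← Real.Gamma_eq_integral hj, div_eq_mul_inv]

/-- The real ratio behind `gammaRatio j` for an integer `j`. -/
theorem gammaRatio_intCast_re {x : ℝ} (j : ℤ) :
    gammaRatio j x = ((Real.Gamma (x + j) / x ^ j / Real.Gamma x : ℝ) : ℂ) := by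
  rw [gammaRatio, Complex.cpow_intCast]
  push_cast
  rw [← Complex.Gamma_ofReal, ← Complex.Gamma_ofReal, div_div, mul_comm]
  push_cast
  rfl

/-- `Γ(x+a) = Γ(x) x^a (1 + O(1/x))`. Expand `(t/x)^a` to first order at the mean `t = x` of the
Gamma density: the linear term integrates to zero, and the remainder is controlled by second
differences of integer moments, which are `O(1/x)` because every normalised integer moment is
`1 + O(1/x)`. -/
theorem nearOne_gammaRatio (a : ℂ) : NearOne (gammaRatio a) := by
  obtain ⟨m, M, hM, hT⟩ := exists_cpow_taylor_bound a
  have hD : ∀ j : ℤ, (fun x => gammaRatio (j + 2 : ℤ) x - 2 * gammaRatio (j + 1 : ℤ) x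
      + gammaRatio j x) =O[atTop] (fun x : ℝ => x⁻¹) := by
    intro j
    refine (((nearOne_gammaRatio_intCast (j + 2)).sub
      ((nearOne_gammaRatio_intCast (j + 1)).const_mul_left 2)).add
      (nearOne_gammaRatio_intCast j)).congr_left fun x => ?_
    ring
  have hO := ((hD m).norm_left.add (hD (-m)).norm_left).const_mul_left M
  refine IsBigO.trans (IsBigO.of_bound 1 ?_) hO
  filter_upwards [eventually_gt_atTop 0, eventually_add_re_pos a,
    eventually_gt_atTop (m : ℝ)] with x hx hxa hxm
  have hG := Real.Gamma_pos_of_pos hx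
  have hGc : (Real.Gamma x : ℂ) ≠ 0 := by exact_mod_cast hG.ne'
  have hxc : (x : ℂ) ≠ 0 := by exact_mod_cast hx.ne'
  have hxac : (x : ℂ) ^ a ≠ 0 := by simp [Complex.cpow_eq_zero_iff, hxc]
  set w : ℝ → ℝ := fun t => Real.exp (-t) * t ^ (x - 1) with hw
  have hwpos : ∀ t ∈ Set.Ioi (0 : ℝ), 0 ≤ w t := fun t ht => by
    have : 0 < t := ht
    simp only [hw]; positivity
  -- the second difference of moments is the integral of `w (u - 1)² u ^ j`
  have hsec : ∀ j : ℤ, 0 < x + j →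
      IntegrableOn (fun t => w t * ((t / x - 1) ^ 2 * (t / x) ^ j)) (Set.Ioi 0) ∧
      ((∫ t in Set.Ioi (0 : ℝ), w t * ((t / x - 1) ^ 2 * (t / x) ^ j) : ℝ) : ℂ) =
        Real.Gamma x * (gammaRatio (j + 2 : ℤ) x - 2 * gammaRatio (j + 1 : ℤ) x
          + gammaRatio j x) := by
    intro j hj
    have g0 : IntegrableOn (fun t => w t * (t / x) ^ j) (Set.Ioi 0) ∧
        ∫ t in Set.Ioi (0 : ℝ), w t * (t / x) ^ j = _ := gamma_moment j hj
    have g1 : IntegrableOn (fun t => w t * (t / x) ^ (j + 1)) (Set.Ioi 0) ∧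
        ∫ t in Set.Ioi (0 : ℝ), w t * (t / x) ^ (j + 1) = _ :=
          gamma_moment (j + 1) (by push_cast; linarith)
    have g2 : IntegrableOn (fun t => w t * (t / x) ^ (j + 2)) (Set.Ioi 0) ∧
        ∫ t in Set.Ioi (0 : ℝ), w t * (t / x) ^ (j + 2) = _ :=
          gamma_moment (j + 2) (by push_cast; linarith)
    have g21 : IntegrableOn (fun t => w t * (t / x) ^ (j + 2) - 2 * (w t * (t / x) ^ (j + 1)))
        (Set.Ioi 0) := g2.1.sub (g1.1.const_mul 2)
    have e : Set.EqOn (fun t => w t * (t / x) ^ (j + 2) - 2 * (w t * (t / x) ^ (j + 1))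
        + w t * (t / x) ^ j) (fun t => w t * ((t / x - 1) ^ 2 * (t / x) ^ j)) (Set.Ioi 0) := by
      intro t ht
      have : t / x ≠ 0 := (div_pos ht hx).ne'
      simp only
      rw [zpow_add₀ this, zpow_add₀ this, zpow_one, zpow_ofNat]
      ring
    refine ⟨IntegrableOn.congr_fun (g21.add g0.1) e measurableSet_Ioi, ?_⟩
    rw [← setIntegral_congr_fun measurableSet_Ioi e, integral_add g21 g0.1,
      integral_sub g2.1 (g1.1.const_mul 2), integral_const_mul, g0.2, g1.2, g2.2,
      gammaRatio_intCast_re, gammaRatio_intCast_re, gammaRatio_intCast_re]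
    push_cast
    field_simp
  obtain ⟨i1, s1⟩ := hsec m (by push_cast; positivity)
  obtain ⟨i2, s2⟩ := hsec (-m) (by push_cast; linarith)
  -- first-order expansion of the Gamma integral
  have key : gammaRatio a x - 1 = (∫ t in Set.Ioi (0 : ℝ),
      (w t : ℂ) * (((t / x : ℝ) : ℂ) ^ a - 1 - a * (((t / x : ℝ) : ℂ) - 1))) / Real.Gamma x := by
    have ia := Complex.GammaIntegral_convergent (s := x + a) (by simpa using hxa)
    have g0 : IntegrableOn (fun t => w t * (t / x) ^ (0 : ℤ)) (Set.Ioi 0) ∧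
        ∫ t in Set.Ioi (0 : ℝ), w t * (t / x) ^ (0 : ℤ) = _ :=
      gamma_moment 0 (by simpa using hx)
    have g1 : IntegrableOn (fun t => w t * (t / x) ^ (1 : ℤ)) (Set.Ioi 0) ∧
        ∫ t in Set.Ioi (0 : ℝ), w t * (t / x) ^ (1 : ℤ) = _ :=
      gamma_moment 1 (by push_cast; linarith)
    have c0 : IntegrableOn (fun t : ℝ => ((w t * (t / x) ^ (0 : ℤ) : ℝ) : ℂ)) (Set.Ioi 0) :=
      g0.1.ofReal
    have c1 : IntegrableOn (fun t : ℝ => ((w t * (t / x) ^ (1 : ℤ) : ℝ) : ℂ)) (Set.Ioi 0) :=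
      g1.1.ofReal
    have e : Set.EqOn (fun t : ℝ => ((-t).exp * (t : ℂ) ^ ((x : ℂ) + a - 1)) * ((x : ℂ) ^ a)⁻¹
        - ((w t * (t / x) ^ (0 : ℤ) : ℝ) : ℂ)
        - a * (((w t * (t / x) ^ (1 : ℤ) : ℝ) : ℂ) - ((w t * (t / x) ^ (0 : ℤ) : ℝ) : ℂ)))
        (fun t => (w t : ℂ) * (((t / x : ℝ) : ℂ) ^ a - 1 - a * (((t / x : ℝ) : ℂ) - 1)))
        (Set.Ioi 0) := by
      intro t ht
      have ht : 0 < t := ht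
      have htc : (t : ℂ) ≠ 0 := by exact_mod_cast ht.ne'
      have h1 : ((t / x : ℝ) : ℂ) ^ a = (t : ℂ) ^ a * ((x : ℂ) ^ a)⁻¹ := by
        have h := Complex.mul_cpow_ofReal_nonneg (a := t / x) (b := x) (by positivity) hx.le a
        rw [← Complex.ofReal_mul, div_mul_cancel₀ _ hx.ne'] at h
        rw [h, mul_assoc, mul_inv_cancel₀ hxac, mul_one]
      have h2 : (t : ℂ) ^ ((x : ℂ) + a - 1) = ((t ^ (x - 1) : ℝ) : ℂ) * (t : ℂ) ^ a := by
        rw [Complex.ofReal_cpow ht.le, ← Complex.cpow_add _ _ htc]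
        congr 1
        push_cast
        ring
      simp only [hw, h1, h2, zpow_zero, zpow_one]
      push_cast
      ring
    have hia : IntegrableOn (fun t : ℝ => ((-t).exp * (t : ℂ) ^ ((x : ℂ) + a - 1)) *
        ((x : ℂ) ^ a)⁻¹) (Set.Ioi 0) := ia.mul_const _
    have hi0 : IntegrableOn (fun t : ℝ => ((-t).exp * (t : ℂ) ^ ((x : ℂ) + a - 1)) *
        ((x : ℂ) ^ a)⁻¹ - ((w t * (t / x) ^ (0 : ℤ) : ℝ) : ℂ)) (Set.Ioi 0) := hia.sub c0
    have c10 : IntegrableOn (fun t : ℝ => a * (((w t * (t / x) ^ (1 : ℤ) : ℝ) : ℂ)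
        - ((w t * (t / x) ^ (0 : ℤ) : ℝ) : ℂ))) (Set.Ioi 0) := (c1.sub c0).const_mul a
    rw [← setIntegral_congr_fun measurableSet_Ioi e, integral_sub hi0 c10, integral_sub hia c0, integral_const_mul,
      integral_sub c1 c0, integral_mul_const, integral_complex_ofReal, integral_complex_ofReal,
      g0.2, g1.2, gammaRatio, Complex.Gamma_eq_integral (s := x + a) (by simpa using hxa),
      Complex.GammaIntegral]
    have hg1 : Real.Gamma (x + (1 : ℤ)) = x * Real.Gamma x := by
      push_cast
      exact Real.Gamma_add_one hx.ne'
    rw [hg1]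
    push_cast
    simp only [zpow_zero, zpow_one, add_zero, div_one]
    field_simp
    ring
  have hint : IntegrableOn (fun t => M * (w t * ((t / x - 1) ^ 2 * (t / x) ^ (m : ℤ))
      + w t * ((t / x - 1) ^ 2 * (t / x) ^ (-m : ℤ)))) (Set.Ioi 0) := (i1.add i2).const_mul M
  have hbound : ‖∫ t in Set.Ioi (0 : ℝ),
      (w t : ℂ) * (((t / x : ℝ) : ℂ) ^ a - 1 - a * (((t / x : ℝ) : ℂ) - 1))‖ ≤
      ∫ t in Set.Ioi (0 : ℝ), M * (w t * ((t / x - 1) ^ 2 * (t / x) ^ (m : ℤ))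
      + w t * ((t / x - 1) ^ 2 * (t / x) ^ (-m : ℤ))) := by
    refine norm_integral_le_of_norm_le hint ?_
    filter_upwards [ae_restrict_mem measurableSet_Ioi] with t ht
    have h := hT (t / x) (div_pos ht hx)
    rw [norm_mul, Complex.norm_real, Real.norm_eq_abs, abs_of_nonneg (hwpos t ht)]
    refine (mul_le_mul_of_nonneg_left h (hwpos t ht)).trans_eq ?_
    rw [zpow_neg, zpow_natCast]
    ring
  rw [integral_const_mul, integral_add i1 i2] at hbound
  rw [key, norm_div, Complex.norm_real, Real.norm_eq_abs, abs_of_pos hG, div_le_iff₀ hG, one_mul]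
  refine hbound.trans ?_
  rw [Real.norm_eq_abs]
  refine le_trans ?_ (mul_le_mul_of_nonneg_right (le_abs_self _) hG.le)
  rw [mul_assoc]
  refine mul_le_mul_of_nonneg_left ?_ hM
  have t1 := congrArg norm s1
  have t2 := congrArg norm s2
  rw [norm_mul, Complex.norm_real, Complex.norm_real, Real.norm_eq_abs, Real.norm_eq_abs,
    abs_of_pos hG] at t1 t2
  rw [add_mul]
  refine add_le_add ?_ ?_
  · exact (le_abs_self _).trans_eq (t1.trans (mul_comm _ _))
  · exact (le_abs_self _).trans_eq (t2.trans (mul_comm _ _))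

theorem nearOne_Gamma_add (a : ℂ) :
    NearOne (fun x => Complex.Gamma (x + a) / ((stir x : ℂ) * (x : ℂ) ^ a)) := by
  refine ((nearOne_gammaRatio a).mul nearOne_Gamma_div_stir).congr ?_
  filter_upwards [eventually_gt_atTop 0] with x hx
  have : (Real.Gamma x : ℂ) ≠ 0 := by exact_mod_cast (Real.Gamma_pos_of_pos hx).ne'
  rw [gammaRatio]
  field_simp

/-! ### The Beta function -/

theorem ofReal_cpow_eq_exp {y : ℝ} (hy : 0 < y) (s : ℂ) :
    (y : ℂ) ^ s = Complex.exp ((Real.log y : ℂ) * s) := by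
  rw [Complex.cpow_def_of_ne_zero (by exact_mod_cast hy.ne'), Complex.ofReal_log hy.le]

theorem stir_mul_cpow {y : ℝ} (hy : 0 < y) (a : ℂ) : (stir y : ℂ) * (y : ℂ) ^ a =
    (√(2 * Real.pi) : ℝ) * Complex.exp ((Real.log y : ℂ) * (y - 1 / 2 + a) - y) := by
  rw [stir, ofReal_cpow_eq_exp hy, Real.rpow_def_of_pos hy]
  push_cast
  rw [mul_assoc, mul_assoc, ← Complex.exp_add, ← Complex.exp_add]
  ring_nf

/-- The `x`-independent factor in the asymptotics of `B(a + kx, c + (l-k)x)`, without the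
`√(2π)`. -/
noncomputable def betaConst (a c : ℂ) (k l : ℝ) : ℂ :=
  (k : ℂ) ^ (a - 1 / 2) * ((l - k : ℝ) : ℂ) ^ (c - 1 / 2) / (l : ℂ) ^ (a + c - 1 / 2)

/-- The `x`-dependent factor `√(2π) φ^x x^{-1/2}`, `φ = k^k (l-k)^{l-k} / l^l`, in the asymptotics
of `B(a + kx, c + (l-k)x)`. It does not involve `a` and `c`. -/
noncomputable def betaScale (k l x : ℝ) : ℝ :=
  √(2 * Real.pi) * (k ^ k * (l - k) ^ (l - k) / l ^ l) ^ x * x ^ (-(1 / 2) : ℝ)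

theorem betaScale_pos {k l : ℝ} (hk : 0 < k) (hkl : k < l) {x : ℝ} (hx : 0 < x) : 0 < betaScale k l x := by
  have h1 : 0 < l - k := sub_pos.mpr hkl
  have h2 : 0 < l := hk.trans hkl
  unfold betaScale
  positivity

theorem betaConst_ne_zero {k l : ℝ} (hk : 0 < k) (hkl : k < l) (a c : ℂ) : betaConst a c k l ≠ 0 := by
  rw [betaConst, ofReal_cpow_eq_exp hk, ofReal_cpow_eq_exp (sub_pos.mpr hkl),
    ofReal_cpow_eq_exp (hk.trans hkl)]
  simp [Complex.exp_ne_zero]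

theorem betaConst_add_one {k l : ℝ} (hk : 0 < k) (hkl : k < l) (a c : ℂ) :
    betaConst (a + 1) c k l = ((k / l : ℝ) : ℂ) * betaConst a c k l := by
  have hk' : (k : ℂ) ≠ 0 := by exact_mod_cast hk.ne'
  have hl' : (l : ℂ) ≠ 0 := by exact_mod_cast (hk.trans hkl).ne'
  have hl2 : (l : ℂ) ^ (a + c - 1 / 2) ≠ 0 := by simp [Complex.cpow_eq_zero_iff, hl']
  rw [betaConst, betaConst, show a + 1 - 1 / 2 = (a - 1 / 2) + 1 by ring,
    show a + 1 + c - 1 / 2 = (a + c - 1 / 2) + 1 by ring, Complex.cpow_add _ _ hk',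
    Complex.cpow_add _ _ hl', Complex.cpow_one, Complex.cpow_one]
  push_cast
  field_simp

/-- The Stirling factors of the three Gamma functions in the Beta function combine exactly. -/
theorem stir_combine {k l : ℝ} (hk : 0 < k) (hkl : k < l) (a c : ℂ) {x : ℝ} (hx : 0 < x) :
    betaConst a c k l * betaScale k l x =
      ((stir (x * k) : ℂ) * ((x * k : ℝ) : ℂ) ^ a) *
        ((stir (x * (l - k)) : ℂ) * ((x * (l - k) : ℝ) : ℂ) ^ c) /
        ((stir (x * l) : ℂ) * ((x * l : ℝ) : ℂ) ^ (a + c)) := by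
  have hm : 0 < l - k := sub_pos.mpr hkl
  have hl : 0 < l := hk.trans hkl
  have hpi : ((√(2 * Real.pi) : ℝ) : ℂ) ≠ 0 := by
    exact_mod_cast (show 0 < √(2 * Real.pi) by positivity).ne'
  rw [stir_mul_cpow (mul_pos hx hk), stir_mul_cpow (mul_pos hx hm), stir_mul_cpow (mul_pos hx hl)]
  have hφ : (k ^ k * (l - k) ^ (l - k) / l ^ l) ^ x =
      Real.exp (x * (k * Real.log k + (l - k) * Real.log (l - k) - l * Real.log l)) := by
    rw [Real.rpow_def_of_pos (by positivity), Real.log_div (by positivity) (by positivity),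
      Real.log_mul (by positivity) (by positivity), Real.log_rpow hk, Real.log_rpow hm,
      Real.log_rpow hl, mul_comm]
  rw [betaConst, betaScale, hφ, Real.rpow_def_of_pos hx, ofReal_cpow_eq_exp hk,
    ofReal_cpow_eq_exp hm, ofReal_cpow_eq_exp hl, Real.log_mul hx.ne' hk.ne',
    Real.log_mul hx.ne' hm.ne', Real.log_mul hx.ne' hl.ne']
  simp only [Complex.ofReal_mul, Complex.ofReal_exp]
  have hcancel : ∀ P X Y Z : ℂ, P ≠ 0 → Z ≠ 0 → P * X * (P * Y) / (P * Z) = P * (X * Y / Z) := by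
    intro P X Y Z hP hZ
    field_simp
  rw [hcancel _ _ _ _ hpi (Complex.exp_ne_zero _), ← Complex.exp_add, ← Complex.exp_sub,
    ← Complex.exp_add, ← Complex.exp_sub, mul_assoc, mul_left_comm, ← Complex.exp_add,
    ← Complex.exp_add]
  congr 2
  push_cast
  ring

/-- `B(a + kx, c + (l-k)x)` for complex `a`, `c`, as `x → +∞`. -/
theorem nearOne_beta {k l : ℝ} (hk : 0 < k) (hkl : k < l) (a c : ℂ) :
    NearOne (fun x => Complex.betaIntegral (a + (x * k : ℝ)) (c + (x * (l - k) : ℝ)) /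
      (betaConst a c k l * betaScale k l x)) := by
  have hm : 0 < l - k := sub_pos.mpr hkl
  have hl : 0 < l := hk.trans hkl
  refine ((((nearOne_Gamma_add a).comp_mul_right hk).mul
    ((nearOne_Gamma_add c).comp_mul_right hm)).mul
    ((nearOne_Gamma_add (a + c)).comp_mul_right hl).inv).congr ?_
  filter_upwards [eventually_gt_atTop 0,
    (tendsto_id.atTop_mul_const hk).eventually (eventually_add_re_pos a),
    (tendsto_id.atTop_mul_const hm).eventually (eventually_add_re_pos c)] with x hx ha hc
  simp only [id] at ha hc
  rw [stir_combine hk hkl a c hx, Complex.betaIntegral_eq_Gamma_mul_div]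
  · rw [show a + ((x * k : ℝ) : ℂ) + (c + ((x * (l - k) : ℝ) : ℂ)) =
      ((x * l : ℝ) : ℂ) + (a + c) by push_cast; ring, add_comm a, add_comm c]
    simp only [div_eq_mul_inv, mul_inv, inv_inv]
    ring_nf
  · simp only [Complex.add_re, Complex.ofReal_re]
    linarith
  · simp only [Complex.add_re, Complex.ofReal_re]
    linarith

/-! ### First-order expansion of `(1 - s)^{-a₀}` -/

/-- First-order expansion of `s ↦ (1 - s)^{-a₀}` at `s₀`, with a remainder controlled on all of
`(0, 1)`. -/
theorem exists_one_sub_cpow_bound (a0 : ℂ) {s0 : ℝ} (h0 : 0 < s0) (h1 : s0 < 1) :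
    ∃ (m : ℕ) (M : ℝ) (G1 : ℂ), 0 ≤ M ∧ ∀ s : ℝ, 0 < s → s < 1 →
      ‖((1 - s : ℝ) : ℂ) ^ (-a0) - ((1 - s0 : ℝ) : ℂ) ^ (-a0) - G1 * ((s : ℂ) - s0)‖ ≤
        M * ((s - s0) ^ 2 * ((1 - s) ^ m)⁻¹) := by
  obtain ⟨m, M, hM, hT⟩ := exists_cpow_taylor_bound (-a0)
  set r := 1 - s0 with hr
  have hr0 : 0 < r := sub_pos.mpr h1
  have hr1 : r ≤ 1 := by linarith
  have hrc : (r : ℂ) ≠ 0 := by exact_mod_cast hr0.ne'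
  set G0 := (r : ℂ) ^ (-a0)
  refine ⟨m, ‖G0‖ * (M * ((r ^ 2)⁻¹ * ((r ^ m)⁻¹ + 1))), G0 * a0 / r, by positivity,
    fun s hs hs1 => ?_⟩
  have hs' : 0 < 1 - s := by linarith
  have hu : 0 < (1 - s) / r := div_pos hs' hr0
  have e1 : ((1 - s : ℝ) : ℂ) ^ (-a0) = G0 * (((1 - s) / r : ℝ) : ℂ) ^ (-a0) := by
    rw [← Complex.mul_cpow_ofReal_nonneg hr0.le hu.le, ← Complex.ofReal_mul,
      mul_div_cancel₀ _ hr0.ne']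
  have e2 : ((1 - s : ℝ) : ℂ) ^ (-a0) - G0 - G0 * a0 / r * ((s : ℂ) - s0) =
      G0 * ((((1 - s) / r : ℝ) : ℂ) ^ (-a0) - 1 - (-a0) * ((((1 - s) / r : ℝ) : ℂ) - 1)) := by
    rw [e1]
    have hs0 : (s0 : ℂ) = 1 - r := by rw [hr]; push_cast; ring
    rw [hs0]
    push_cast
    field_simp
    ring
  rw [e2, norm_mul, mul_assoc]
  refine mul_le_mul_of_nonneg_left ((hT _ hu).trans ?_) (norm_nonneg _)
  rw [mul_assoc]
  refine mul_le_mul_of_nonneg_left ?_ hM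
  have e3 : ((1 - s) / r - 1) ^ 2 = (s - s0) ^ 2 * (r ^ 2)⁻¹ := by
    rw [show s0 = 1 - r by rw [hr]; ring]
    field_simp
    ring
  have hinv : 1 ≤ ((1 - s) ^ m)⁻¹ :=
    (one_le_inv₀ (by positivity)).mpr (pow_le_one₀ hs'.le (by linarith))
  have b1 : ((1 - s) / r) ^ m ≤ (r ^ m)⁻¹ * ((1 - s) ^ m)⁻¹ := by
    rw [div_pow, div_eq_mul_inv, mul_comm]
    refine mul_le_mul_of_nonneg_left ?_ (by positivity)
    exact (pow_le_one₀ hs'.le (by linarith)).trans hinv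
  have b2 : (((1 - s) / r) ^ m)⁻¹ ≤ ((1 - s) ^ m)⁻¹ := by
    rw [div_pow, inv_div, div_eq_mul_inv]
    exact mul_le_of_le_one_left (by positivity) (pow_le_one₀ hr0.le hr1)
  rw [e3]
  calc (s - s0) ^ 2 * (r ^ 2)⁻¹ * (((1 - s) / r) ^ m + (((1 - s) / r) ^ m)⁻¹)
      ≤ (s - s0) ^ 2 * (r ^ 2)⁻¹ * ((r ^ m)⁻¹ * ((1 - s) ^ m)⁻¹ + ((1 - s) ^ m)⁻¹) := by gcongr
    _ = _ := by ring

/-! ### Products of Beta densities on the unit cube -/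

section Product

variable {p : ℕ}

/-- The open unit cube in `ℝ^p`. -/
abbrev cube (p : ℕ) : Set (Fin p → ℝ) := Set.univ.pi fun _ : Fin p => Set.Ioo (0 : ℝ) 1

/-- The product Beta density `∏ tᵢ^{Aᵢ-1} (1-tᵢ)^{Cᵢ-1}`. -/
noncomputable def betaWeight (A C : Fin p → ℂ) (t : Fin p → ℝ) : ℂ :=
  ∏ i, (t i : ℂ) ^ (A i - 1) * (1 - (t i : ℂ)) ^ (C i - 1)

theorem measurableSet_cube : MeasurableSet (cube p) :=
  MeasurableSet.univ_pi fun _ => measurableSet_Ioo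

theorem volume_restrict_cube : (volume : Measure (Fin p → ℝ)).restrict (cube p) =
    Measure.pi fun _ => (volume : Measure ℝ).restrict (Set.Ioo 0 1) :=
  Measure.restrict_pi_pi _ _

theorem integrableOn_betaWeight {A C : Fin p → ℂ} (hA : ∀ i, 0 < (A i).re)
    (hC : ∀ i, 0 < (C i).re) : IntegrableOn (betaWeight A C) (cube p) := by
  rw [IntegrableOn, volume_restrict_cube]
  refine Integrable.fintype_prod
    (f := fun i (y : ℝ) => (y : ℂ) ^ (A i - 1) * (1 - (y : ℂ)) ^ (C i - 1)) fun i => ?_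
  have h := (intervalIntegrable_iff_integrableOn_Ioo_of_le zero_le_one).mp
    (Complex.betaIntegral_convergent (hA i) (hC i))
  exact h

theorem integral_betaWeight (A C : Fin p → ℂ) :
    ∫ t in cube p, betaWeight A C t = ∏ i, Complex.betaIntegral (A i) (C i) := by
  rw [volume_restrict_cube]
  refine (integral_fintype_prod_eq_prod
    (fun i (y : ℝ) => (y : ℂ) ^ (A i - 1) * (1 - (y : ℂ)) ^ (C i - 1))).trans ?_
  refine Finset.prod_congr rfl fun i _ => ?_
  rw [Complex.betaIntegral, intervalIntegral.integral_of_le zero_le_one,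
    integral_Ioc_eq_integral_Ioo]

theorem betaWeight_add_one (A C : Fin p → ℂ) {t : Fin p → ℝ} (ht : t ∈ cube p) :
    betaWeight (fun i => A i + 1) C t = betaWeight A C t * ((∏ i, t i : ℝ) : ℂ) := by
  rw [betaWeight, betaWeight, Complex.ofReal_prod, ← Finset.prod_mul_distrib]
  refine Finset.prod_congr rfl fun i _ => ?_
  have hi : (t i : ℂ) ≠ 0 := by exact_mod_cast (ht i trivial).1.ne'
  rw [add_sub_right_comm, Complex.cpow_add _ _ hi, Complex.cpow_one]
  ring

/-- Passing to real parts of the exponents gives the norm of the density; lowering the `Cᵢ` by `m`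
divides it by `∏ (1-tᵢ)^m`. -/
theorem betaWeight_re (A C : Fin p → ℂ) (m : ℕ) {t : Fin p → ℝ} (ht : t ∈ cube p) :
    betaWeight (fun i => ((A i).re : ℂ)) (fun i => ((C i).re : ℂ) - m) t =
      ((‖betaWeight A C t‖ * ((∏ i, (1 - t i)) ^ m)⁻¹ : ℝ) : ℂ) := by
  rw [betaWeight, betaWeight, norm_prod, ← Finset.prod_pow, ← Finset.prod_inv_distrib,
    ← Finset.prod_mul_distrib, Complex.ofReal_prod]
  refine Finset.prod_congr rfl fun i _ => ?_
  have h0 := (ht i trivial).1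
  have h1 : 0 < 1 - t i := sub_pos.mpr (ht i trivial).2
  have e : (1 : ℂ) - (t i : ℂ) = ((1 - t i : ℝ) : ℂ) := by push_cast; rfl
  have h1c : ((1 - t i : ℝ) : ℂ) ≠ 0 := by exact_mod_cast h1.ne'
  rw [e, norm_mul, Complex.norm_cpow_eq_rpow_re_of_pos h0,
    Complex.norm_cpow_eq_rpow_re_of_pos h1, Complex.ofReal_mul, Complex.ofReal_mul,
    Complex.ofReal_cpow h0.le, Complex.ofReal_cpow h1.le, Complex.ofReal_inv, Complex.ofReal_pow,
    show ((C i).re : ℂ) - m - 1 = (((C i - 1).re : ℝ) : ℂ) - m by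
      simp only [Complex.sub_re, Complex.one_re]; push_cast; ring,
    Complex.cpow_sub _ _ h1c, Complex.cpow_natCast, div_eq_mul_inv, ← mul_assoc]
  congr 4
  simp

theorem prod_le_apply {f : Fin p → ℝ} (h0 : ∀ i, 0 ≤ f i) (h1 : ∀ i, f i ≤ 1) (j : Fin p) :
    ∏ i, f i ≤ f j := by
  rw [← Finset.mul_prod_erase _ _ (Finset.mem_univ j)]
  exact mul_le_of_le_one_right (h0 j) (Finset.prod_le_one (fun i _ => h0 i) fun i _ => h1 i)

variable (k l : Fin p → ℝ)

/-- `∏ B(aᵢ + kᵢ x, cᵢ + (lᵢ - kᵢ) x)`. -/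
noncomputable def betaProd (a c : Fin p → ℂ) (x : ℝ) : ℂ :=
  ∏ i, Complex.betaIntegral (a i + (x * k i : ℝ)) (c i + (x * (l i - k i) : ℝ))

/-- The scale `Ψ(x) = (2π)^{p/2} Φ_max^x x^{-p/2}`, as a product of one-dimensional scales. -/
noncomputable def scaleProd (x : ℝ) : ℝ := ∏ i, betaScale (k i) (l i) x

/-- The constant in the asymptotics of `betaProd`. -/
noncomputable def constProd (a c : Fin p → ℂ) : ℂ := ∏ i, betaConst (a i) (c i) (k i) (l i)

variable {k l}

theorem scaleProd_pos (hk : ∀ i, 0 < k i) (hkl : ∀ i, k i < l i)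
    {x : ℝ} (hx : 0 < x) : 0 < scaleProd k l x :=
  Finset.prod_pos fun i _ => betaScale_pos (hk i) (hkl i) hx

theorem constProd_ne_zero (hk : ∀ i, 0 < k i) (hkl : ∀ i, k i < l i)
    (a c : Fin p → ℂ) : constProd k l a c ≠ 0 :=
  Finset.prod_ne_zero_iff.mpr fun i _ => betaConst_ne_zero (hk i) (hkl i) _ _

theorem constProd_add_one (hk : ∀ i, 0 < k i) (hkl : ∀ i, k i < l i)
    (a c : Fin p → ℂ) : constProd k l (fun i => a i + 1) c =
    (((∏ i, k i) / ∏ i, l i : ℝ) : ℂ) * constProd k l a c := by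
  rw [constProd, constProd, ← Finset.prod_div_distrib, Complex.ofReal_prod,
    ← Finset.prod_mul_distrib]
  exact Finset.prod_congr rfl fun i _ => betaConst_add_one (hk i) (hkl i) _ _

theorem betaProd_isBigO (hk : ∀ i, 0 < k i) (hkl : ∀ i, k i < l i)
    (a c : Fin p → ℂ) :
    (fun x => betaProd k l a c x / scaleProd k l x - constProd k l a c)
      =O[atTop] (fun x : ℝ => x⁻¹) := by
  have h : NearOne (fun x => betaProd k l a c x / (constProd k l a c * scaleProd k l x)) := by
    refine (NearOne.prod Finset.univ fun i => nearOne_beta (hk i) (hkl i) (a i) (c i)).congr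
      (Eventually.of_forall fun x => ?_)
    rw [Finset.prod_div_distrib, Finset.prod_mul_distrib, betaProd, constProd, scaleProd,
      Complex.ofReal_prod]
  refine (IsBigO.const_mul_left h (constProd k l a c)).congr_left fun x => ?_
  have := constProd_ne_zero hk hkl a c
  rw [mul_sub, mul_one, ← mul_div_assoc, mul_div_mul_left _ _ this]

end Product

/-! ### The Euler integral -/

/-- The Euler integral along `x ↦ a + x k` for real `x`: absolute convergence, and comparison
with the leading term. `(1 - ∏ tᵢ)^{-a₀}` is expanded to first order at `∏ kᵢ / ∏ lᵢ`. The constant and linear terms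
integrate to Beta products, and the linear one cancels to leading order; the remainder is dominated
by a second difference of Beta products with real exponents, which cancels in the same way. -/
theorem euler_isBigO {p : ℕ} (hp : 1 ≤ p) (a0 : ℂ) (a c : Fin p → ℂ) {k l : Fin p → ℝ}
    (hk : ∀ i, 0 < k i) (hkl : ∀ i, k i < l i) :
    (∀ᶠ x : ℝ in atTop, IntegrableOn (fun t : Fin p → ℝ =>
      betaWeight (fun i => a i + (x * k i : ℝ)) (fun i => c i + (x * (l i - k i) : ℝ)) t *
        ((1 - ∏ i, t i : ℝ) : ℂ) ^ (-a0)) (cube p)) ∧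
    (fun x : ℝ => (∫ t in cube p,
      betaWeight (fun i => a i + (x * k i : ℝ)) (fun i => c i + (x * (l i - k i) : ℝ)) t *
        ((1 - ∏ i, t i : ℝ) : ℂ) ^ (-a0)) / scaleProd k l x -
        ((1 - (∏ i, k i) / ∏ i, l i : ℝ) : ℂ) ^ (-a0) * constProd k l a c)
      =O[atTop] (fun x : ℝ => x⁻¹) := by
  have hl : ∀ i, 0 < l i := fun i => (hk i).trans (hkl i)
  let i0 : Fin p := ⟨0, hp⟩
  set s0 : ℝ := (∏ i, k i) / ∏ i, l i with hs0
  have hs0pos : 0 < s0 := div_pos (Finset.prod_pos fun i _ => hk i) (Finset.prod_pos fun i _ => hl i)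
  have hs0lt : s0 < 1 := by
    rw [hs0, ← Finset.prod_div_distrib]
    exact (prod_le_apply (fun i => (div_pos (hk i) (hl i)).le)
      (fun i => ((div_lt_one (hl i)).mpr (hkl i)).le) i0).trans_lt
      ((div_lt_one (hl i0)).mpr (hkl i0))
  obtain ⟨m, M, G1, hM, hT⟩ := exists_one_sub_cpow_bound a0 hs0pos hs0lt
  set G0 : ℂ := ((1 - s0 : ℝ) : ℂ) ^ (-a0)
  -- exponents of the dominating real densities
  set a' : Fin p → ℂ := fun i => ((a i).re : ℂ) with ha'
  set c' : Fin p → ℂ := fun i => ((c i).re : ℂ) - m with hc'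
  set κ : ℝ → ℂ := fun x => betaProd k l (fun i => a' i + 1 + 1) c' x -
    2 * s0 * betaProd k l (fun i => a' i + 1) c' x + s0 ^ 2 * betaProd k l a' c' x with hκ
  have hκO : (fun x => κ x / scaleProd k l x) =O[atTop] (fun x : ℝ => x⁻¹) := by
    have e1 := constProd_add_one hk hkl a' c'
    have e2 := constProd_add_one hk hkl (fun i => a' i + 1) c'
    refine (((betaProd_isBigO hk hkl (fun i => a' i + 1 + 1) c').sub
      ((betaProd_isBigO hk hkl (fun i => a' i + 1) c').const_mul_left (2 * s0))).add
      ((betaProd_isBigO hk hkl a' c').const_mul_left (s0 ^ 2))).congr_left fun x => ?_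
    rw [e2, e1, hκ]
    ring
  have hmain : ∀ᶠ x : ℝ in atTop,
      IntegrableOn (fun t : Fin p → ℝ =>
        betaWeight (fun i => a i + (x * k i : ℝ)) (fun i => c i + (x * (l i - k i) : ℝ)) t *
          ((1 - ∏ i, t i : ℝ) : ℂ) ^ (-a0)) (cube p) ∧
      ‖(∫ t in cube p,
        betaWeight (fun i => a i + (x * k i : ℝ)) (fun i => c i + (x * (l i - k i) : ℝ)) t *
          ((1 - ∏ i, t i : ℝ) : ℂ) ^ (-a0)) - (G0 * betaProd k l a c x +
          G1 * (betaProd k l (fun i => a i + 1) c x - s0 * betaProd k l a c x))‖ ≤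
        M * ‖κ x‖ := by
    have hposA : ∀ᶠ x : ℝ in atTop, ∀ i, 0 < x * k i + (a i).re :=
      eventually_all.mpr fun i =>
        (tendsto_id.atTop_mul_const (hk i)).eventually (eventually_add_re_pos (a i))
    have hposC : ∀ᶠ x : ℝ in atTop, ∀ i, 0 < x * (l i - k i) + (c i - m).re :=
      eventually_all.mpr fun i => (tendsto_id.atTop_mul_const
        (sub_pos.mpr (hkl i))).eventually (eventually_add_re_pos (c i - m))
    filter_upwards [hposA, hposC] with x hxA hxC
    set A : Fin p → ℂ := fun i => a i + (x * k i : ℝ) with hA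
    set C : Fin p → ℂ := fun i => c i + (x * (l i - k i) : ℝ) with hC
    set A' : Fin p → ℂ := fun i => ((A i).re : ℂ) with hA'
    set C' : Fin p → ℂ := fun i => ((C i).re : ℂ) - m with hC'
    have hAre : ∀ i, 0 < (A i).re := fun i => by
      simp only [hA, Complex.add_re, Complex.ofReal_re]
      linarith [hxA i]
    have hC're : ∀ i, 0 < (C' i).re := fun i => by
      have := hxC i
      simp only [Complex.sub_re, Complex.natCast_re] at this
      simp only [hC', hC, Complex.add_re, Complex.ofReal_re, Complex.sub_re, Complex.natCast_re]
      linarith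
    have hCre : ∀ i, 0 < (C i).re := fun i => by
      have := hC're i
      simp only [hC', Complex.ofReal_re, Complex.sub_re, Complex.natCast_re] at this
      have hm : (0 : ℝ) ≤ m := m.cast_nonneg
      linarith
    have hA're : ∀ i, 0 < (A' i).re := fun i => by simpa [hA'] using hAre i
    have hA're1 : ∀ i, 0 < (A' i + 1).re := fun i => by
      rw [Complex.add_re, Complex.one_re]; linarith [hA're i]
    have hA're2 : ∀ i, 0 < (A' i + 1 + 1).re := fun i => by
      rw [Complex.add_re, Complex.one_re]; linarith [hA're1 i]
    have hAre1 : ∀ i, 0 < (A i + 1).re := fun i => by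
      rw [Complex.add_re, Complex.one_re]; linarith [hAre i]
    have hA'eq : A' = fun i => a' i + (x * k i : ℝ) := by
      funext i; simp [hA', hA, ha']
    have hC'eq : C' = fun i => c' i + (x * (l i - k i) : ℝ) := by
      funext i; simp [hC', hC, hc']; ring
    -- the five Beta products as integrals
    have hJ0 : ∫ t in cube p, betaWeight A C t = betaProd k l a c x := integral_betaWeight A C
    have hJ1 : ∫ t in cube p, betaWeight (fun i => A i + 1) C t =
        betaProd k l (fun i => a i + 1) c x := by
      rw [integral_betaWeight, betaProd]
      simp only [hA, hC, add_right_comm]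
    have hK0 : ∫ t in cube p, betaWeight A' C' t = betaProd k l a' c' x := by
      rw [integral_betaWeight, hA'eq, hC'eq, betaProd]
    have hK1 : ∫ t in cube p, betaWeight (fun i => A' i + 1) C' t =
        betaProd k l (fun i => a' i + 1) c' x := by
      rw [integral_betaWeight, hA'eq, hC'eq, betaProd]
      simp only [add_right_comm]
    have hK2 : ∫ t in cube p, betaWeight (fun i => A' i + 1 + 1) C' t =
        betaProd k l (fun i => a' i + 1 + 1) c' x := by
      rw [integral_betaWeight, hA'eq, hC'eq, betaProd]
      refine Finset.prod_congr rfl fun i _ => ?_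
      congr 1
      ring
    have iJ0 := integrableOn_betaWeight hAre hCre
    have iJ1 := integrableOn_betaWeight hAre1 hCre
    have iK0 := integrableOn_betaWeight hA're hC're
    have iK1 := integrableOn_betaWeight hA're1 hC're
    have iK2 := integrableOn_betaWeight hA're2 hC're
    -- the dominating function of the remainder, and its integral `κ x`
    set v : (Fin p → ℝ) → ℝ := fun t =>
      ‖betaWeight A C t‖ * ((∏ i, (1 - t i)) ^ m)⁻¹ * ((∏ i, t i) - s0) ^ 2 with hv
    have iK21 : IntegrableOn (fun t => betaWeight (fun i => A' i + 1 + 1) C' t -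
        2 * s0 * betaWeight (fun i => A' i + 1) C' t) (cube p) := iK2.sub (iK1.const_mul _)
    have hvV : Set.EqOn (fun t => betaWeight (fun i => A' i + 1 + 1) C' t -
        2 * s0 * betaWeight (fun i => A' i + 1) C' t + s0 ^ 2 * betaWeight A' C' t)
        (fun t => (v t : ℂ)) (cube p) := by
      intro t ht
      simp only
      rw [betaWeight_add_one (fun i => A' i + 1) C' ht, betaWeight_add_one A' C' ht,
        betaWeight_re A C m ht, hv]
      push_cast
      ring
    have ivc : IntegrableOn (fun t => (v t : ℂ)) (cube p) :=
      IntegrableOn.congr_fun (iK21.add (iK0.const_mul _)) hvV measurableSet_cube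
    have iv : Integrable (fun t => v t) (volume.restrict (cube p)) := by
      simpa using Integrable.re ivc
    have hvint : ((∫ t in cube p, v t : ℝ) : ℂ) = κ x := by
      rw [← integral_complex_ofReal, ← setIntegral_congr_fun measurableSet_cube hvV,
        integral_add iK21 (iK0.const_mul _), integral_sub iK2 (iK1.const_mul _),
        integral_const_mul, integral_const_mul, hK0, hK1, hK2]
    set ρ : (Fin p → ℝ) → ℂ := fun t =>
      ((1 - ∏ i, t i : ℝ) : ℂ) ^ (-a0) - G0 - G1 * (((∏ i, t i : ℝ) : ℂ) - s0) with hρ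
    have hbound : ∀ t ∈ cube p, ‖betaWeight A C t * ρ t‖ ≤ M * v t := by
      intro t ht
      have h0 : ∀ i, 0 < t i := fun i => (ht i trivial).1
      have h1 : ∀ i, t i < 1 := fun i => (ht i trivial).2
      have hs1 : ∏ i, t i ≤ t i0 := prod_le_apply (fun i => (h0 i).le) (fun i => (h1 i).le) i0
      have hs2 : ∏ i, (1 - t i) ≤ 1 - t i0 :=
        prod_le_apply (f := fun i => 1 - t i) (fun i => by linarith [h1 i])
          (fun i => by linarith [h0 i]) i0
      have hs3 : 0 < ∏ i, (1 - t i) := Finset.prod_pos fun i _ => sub_pos.mpr (h1 i)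
      have h := hT (∏ i, t i) (Finset.prod_pos fun i _ => h0 i) (hs1.trans_lt (h1 i0))
      have hpow : ((1 - ∏ i, t i) ^ m)⁻¹ ≤ ((∏ i, (1 - t i)) ^ m)⁻¹ := by
        gcongr
        linarith
      rw [norm_mul]
      calc ‖betaWeight A C t‖ * ‖ρ t‖
          ≤ ‖betaWeight A C t‖ * (M * (((∏ i, t i) - s0) ^ 2 * ((∏ i, (1 - t i)) ^ m)⁻¹)) := by
            refine mul_le_mul_of_nonneg_left (h.trans ?_) (norm_nonneg _)
            gcongr
        _ = M * v t := by rw [hv]; ring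
    have hmeas : Measurable (fun t : Fin p → ℝ => betaWeight A C t * ρ t) := by
      unfold betaWeight
      fun_prop
    have iρ : IntegrableOn (fun t => betaWeight A C t * ρ t) (cube p) := by
      refine Integrable.mono' (iv.const_mul M) hmeas.aestronglyMeasurable ?_
      filter_upwards [ae_restrict_mem measurableSet_cube] with t ht using hbound t ht
    have hEq : Set.EqOn (fun t => G0 * betaWeight A C t + G1 * (betaWeight (fun i => A i + 1) C t -
        s0 * betaWeight A C t) + betaWeight A C t * ρ t)
        (fun t => betaWeight A C t * ((1 - ∏ i, t i : ℝ) : ℂ) ^ (-a0)) (cube p) := by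
      intro t ht
      simp only
      rw [betaWeight_add_one A C ht, hρ]
      ring
    have iL1 : IntegrableOn (fun t => betaWeight (fun i => A i + 1) C t -
        s0 * betaWeight A C t) (cube p) := iJ1.sub (iJ0.const_mul _)
    have iL : IntegrableOn (fun t => G0 * betaWeight A C t + G1 * (betaWeight (fun i => A i + 1) C t -
        s0 * betaWeight A C t)) (cube p) := (iJ0.const_mul _).add (iL1.const_mul _)
    refine ⟨IntegrableOn.congr_fun (iL.add iρ) hEq measurableSet_cube, ?_⟩
    rw [← setIntegral_congr_fun measurableSet_cube hEq, integral_add iL iρ,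
      integral_add (iJ0.const_mul _) (iL1.const_mul _), integral_const_mul, integral_const_mul,
      integral_sub iJ1 (iJ0.const_mul _), integral_const_mul, hJ0, hJ1, add_sub_cancel_left]
    refine (norm_integral_le_of_norm_le (iv.const_mul M) ?_).trans ?_
    · filter_upwards [ae_restrict_mem measurableSet_cube] with t ht using hbound t ht
    · rw [integral_const_mul, ← hvint, Complex.norm_real]
      exact mul_le_mul_of_nonneg_left (le_abs_self _) hM
  refine ⟨hmain.mono fun x hx => hx.1, ?_⟩
  have hrem : (fun x : ℝ => ((∫ t in cube p,
      betaWeight (fun i => a i + (x * k i : ℝ)) (fun i => c i + (x * (l i - k i) : ℝ)) t *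
        ((1 - ∏ i, t i : ℝ) : ℂ) ^ (-a0)) - (G0 * betaProd k l a c x +
        G1 * (betaProd k l (fun i => a i + 1) c x - s0 * betaProd k l a c x))) /
        scaleProd k l x) =O[atTop] (fun x : ℝ => x⁻¹) := by
    refine IsBigO.trans (IsBigO.of_bound M ?_) hκO
    filter_upwards [hmain] with x hx
    rw [norm_div, norm_div, ← mul_div_assoc]
    exact div_le_div_of_nonneg_right hx.2 (norm_nonneg _)
  have hlin := ((betaProd_isBigO hk hkl (fun i => a i + 1) c).sub
    ((betaProd_isBigO hk hkl a c).const_mul_left (s0 : ℂ))).const_mul_left G1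
  refine ((hrem.add ((betaProd_isBigO hk hkl a c).const_mul_left G0)).add hlin).congr_left
    fun x => ?_
  rw [constProd_add_one hk hkl a c]
  ring

theorem scaleProd_natCast {p : ℕ} (k l : Fin p → ℝ) (n : ℕ) :
    scaleProd k l n = (2 * Real.pi) ^ ((p : ℝ) / 2) *
      (∏ i, k i ^ k i * (l i - k i) ^ (l i - k i) / l i ^ l i) ^ n *
      (n : ℝ) ^ (-(p : ℝ) / 2) := by
  have h1 : √(2 * Real.pi) ^ p = (2 * Real.pi) ^ ((p : ℝ) / 2) := by
    rw [Real.sqrt_eq_rpow, ← Real.rpow_natCast, ← Real.rpow_mul (by positivity)]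
    congr 1
    ring
  have h2 : ((n : ℝ) ^ (-(1 / 2) : ℝ)) ^ p = (n : ℝ) ^ (-(p : ℝ) / 2) := by
    rw [← Real.rpow_natCast, ← Real.rpow_mul n.cast_nonneg]
    congr 1
    ring
  rw [← h1, ← h2]
  simp only [scaleProd, betaScale, Finset.prod_mul_distrib, Finset.prod_const, Finset.card_univ,
    Fintype.card_fin, Real.rpow_natCast, Finset.prod_pow]

/-- Laplace asymptotics of the Euler integral `E_p(a + nk)` with
`k = (0,k₁,…,k_p; l₁,…,l_p)`, `lᵢ > kᵢ > 0`:  for all sufficiently large `n` the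
integral converges absolutely, and
`E_p(a+nk) = C · Φ_max^n · n^{−p/2} · (1 + O(1/n))` as `n → ∞`, where
`Φ_max = ∏ kᵢ^{kᵢ}(lᵢ−kᵢ)^{lᵢ−kᵢ}/lᵢ^{lᵢ}` and
`C = (2π)^{p/2}(1 − ∏kᵢ/∏lᵢ)^{−a₀} ∏ kᵢ^{aᵢ−1/2}(lᵢ−kᵢ)^{bᵢ−aᵢ−1/2}/lᵢ^{bᵢ−1/2}`. -/
theorem euler_integral_laplace_asymptotics (p : ℕ) (hp : 1 ≤ p)
    (a0 : ℂ) (a b : Fin p → ℂ)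
    (ha0 : ∀ m : ℤ, m ≤ 0 → a0 ≠ (m : ℂ))
    (k l : Fin p → ℝ) (hk : ∀ i, 0 < k i) (hkl : ∀ i, k i < l i) :
    ∃ K : ℝ, 0 < K ∧ ∃ N : ℕ, ∀ n : ℕ, N ≤ n →
      IntegrableOn
        (fun t : Fin p → ℝ =>
          (∏ i, (t i : ℂ) ^ (a i + (n * k i : ℝ) - 1) *
              ((1 : ℂ) - (t i : ℂ)) ^ (b i + (n * l i : ℝ) - (a i + (n * k i : ℝ)) - 1)) /
            ((1 : ℂ) - ∏ i, (t i : ℂ)) ^ a0)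
        (Set.univ.pi fun _ : Fin p => Set.Ioo (0 : ℝ) 1) volume ∧
      ‖(∫ t in Set.univ.pi fun _ : Fin p => Set.Ioo (0 : ℝ) 1,
            (∏ i, (t i : ℂ) ^ (a i + (n * k i : ℝ) - 1) *
                ((1 : ℂ) - (t i : ℂ)) ^ (b i + (n * l i : ℝ) - (a i + (n * k i : ℝ)) - 1)) /
              ((1 : ℂ) - ∏ i, (t i : ℂ)) ^ a0) /
          ((((2 * Real.pi : ℝ) ^ ((p : ℝ) / 2) : ℝ) : ℂ) *
              ((1 : ℂ) - (((∏ i, k i) / ∏ i, l i : ℝ) : ℂ)) ^ (-a0) *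
              (∏ i, ((k i : ℝ) : ℂ) ^ (a i - 1 / 2) *
                  ((l i - k i : ℝ) : ℂ) ^ (b i - a i - 1 / 2) / ((l i : ℝ) : ℂ) ^ (b i - 1 / 2)) *
            (((∏ i, k i ^ k i * (l i - k i) ^ (l i - k i) / l i ^ l i : ℝ) ^ n : ℝ) : ℂ) *
            (((n : ℝ) ^ (-(p : ℝ) / 2) : ℝ) : ℂ)) - 1‖ ≤ K / n := by
  have hl : ∀ i, 0 < l i := fun i => (hk i).trans (hkl i)
  obtain ⟨hint, hO⟩ := euler_isBigO hp a0 a (fun i => b i - a i) hk hkl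
  set s0 : ℝ := (∏ i, k i) / ∏ i, l i with hs0
  have hlt : s0 < 1 := by
    rw [hs0, ← Finset.prod_div_distrib]
    exact (prod_le_apply (fun i => (div_pos (hk i) (hl i)).le)
      (fun i => ((div_lt_one (hl i)).mpr (hkl i)).le) ⟨0, hp⟩).trans_lt
      ((div_lt_one (hl _)).mpr (hkl _))
  set G0 : ℂ := ((1 - s0 : ℝ) : ℂ) ^ (-a0) with hG0
  have hG0ne : G0 ≠ 0 := by
    rw [hG0, ofReal_cpow_eq_exp (sub_pos.mpr hlt)]
    exact Complex.exp_ne_zero _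
  have hDne := constProd_ne_zero hk hkl a (fun i => b i - a i)
  set D := constProd k l a (fun i => b i - a i) with hD
  have hGD : G0 * D ≠ 0 := mul_ne_zero hG0ne hDne
  have hO' := (hO.const_mul_left (G0 * D)⁻¹).comp_tendsto tendsto_natCast_atTop_atTop
  obtain ⟨K, hK, hbound⟩ := hO'.exists_pos
  have hev := (hbound.bound).and ((tendsto_natCast_atTop_atTop (R := ℝ)).eventually hint)
  obtain ⟨N, hN⟩ := eventually_atTop.mp (hev.and (eventually_gt_atTop 0))
  refine ⟨K, hK, N, fun n hn => ?_⟩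
  obtain ⟨⟨h1, h2⟩, hn0⟩ := hN n hn
  have hfun : (fun t : Fin p → ℝ =>
      (∏ i, (t i : ℂ) ^ (a i + (n * k i : ℝ) - 1) *
        ((1 : ℂ) - (t i : ℂ)) ^ (b i + (n * l i : ℝ) - (a i + (n * k i : ℝ)) - 1)) /
        ((1 : ℂ) - ∏ i, (t i : ℂ)) ^ a0) = fun t : Fin p → ℝ =>
      betaWeight (fun i => a i + ((n : ℝ) * k i : ℝ))
        (fun i => b i - a i + ((n : ℝ) * (l i - k i) : ℝ)) t *
        ((1 - ∏ i, t i : ℝ) : ℂ) ^ (-a0) := by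
    funext t
    have hs : (1 : ℂ) - ∏ i, (t i : ℂ) = ((1 - ∏ i, t i : ℝ) : ℂ) := by push_cast; rfl
    rw [betaWeight, Complex.cpow_neg, div_eq_mul_inv, hs]
    refine congrArg (· * _) (Finset.prod_congr rfl fun i _ => ?_)
    congr 2
    push_cast
    ring
  rw [hfun]
  refine ⟨h2, ?_⟩
  have hnr : (0 : ℝ) < n := by exact_mod_cast hn0
  have hΨ : ((scaleProd k l n : ℝ) : ℂ) ≠ 0 := by
    exact_mod_cast (scaleProd_pos hk hkl hnr).ne'
  have hDeq : (∏ i, ((k i : ℝ) : ℂ) ^ (a i - 1 / 2) * ((l i - k i : ℝ) : ℂ) ^ (b i - a i - 1 / 2) /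
      ((l i : ℝ) : ℂ) ^ (b i - 1 / 2)) = D := by
    rw [hD, constProd]
    refine Finset.prod_congr rfl fun i _ => ?_
    rw [betaConst, add_sub_cancel]
  have hden : (((2 * Real.pi : ℝ) ^ ((p : ℝ) / 2) : ℝ) : ℂ) * ((1 : ℂ) - (s0 : ℂ)) ^ (-a0) * D *
      (((∏ i, k i ^ k i * (l i - k i) ^ (l i - k i) / l i ^ l i : ℝ) ^ n : ℝ) : ℂ) *
      (((n : ℝ) ^ (-(p : ℝ) / 2) : ℝ) : ℂ) = G0 * D * (scaleProd k l n : ℝ) := by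
    rw [scaleProd_natCast, hG0, Complex.ofReal_sub, Complex.ofReal_one, Complex.ofReal_mul,
      Complex.ofReal_mul]
    ring
  rw [hDeq, hden]
  simp only [Function.comp_apply, norm_inv, Real.norm_eq_abs, abs_of_pos hnr] at h1
  rw [div_eq_mul_inv K]
  refine Eq.trans_le ?_ h1
  congr 1
  field_simp
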